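/- Let n be a positive integer, let a = (a_1, …, a_n) ∈ ℤ^n with a_i ≥ 1 for all i, and let T be a multitree of type a. Then h*(C_T; z) = ∏_{i=1}^n ((1+z)^{a_i} + 2 a_i z (1+z)^{a_i−1}). -/

import Mathlib

open Polynomial Pointwise

/-- The set of vertices (generating points) of the cosmological polytope of the
multigraph with edge-endpoint map `ends : E → Sym2 V`. -/
def cosmoVertices {V E : Type*} [DecidableEq V] [DecidableEq E] (ends : E → Sym2 V) :
    Set ((V ⊕ E) → ℝ) :=
  { x | ∃ (f : E) (i j : V), ends f = s(i, j) ∧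
      (x = Pi.single (Sum.inl i) 1 + Pi.single (Sum.inl j) 1 - Pi.single (Sum.inr f) 1 ∨
       x = Pi.single (Sum.inl i) 1 - Pi.single (Sum.inl j) 1 + Pi.single (Sum.inr f) 1 ∨
       x = -Pi.single (Sum.inl i) 1 + Pi.single (Sum.inl j) 1 + Pi.single (Sum.inr f) 1) }

/-- The cosmological polytope of a multigraph. -/
def cosmoPolytope {V E : Type*} [DecidableEq V] [DecidableEq E] (ends : E → Sym2 V) :
    Set ((V ⊕ E) → ℝ) :=
  convexHull ℝ (cosmoVertices ends)

/-- Number of lattice points of the `t`-th dilate of `P`. -/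
noncomputable def latticePointCount {ι : Type*} (P : Set (ι → ℝ)) (t : ℕ) : ℕ :=
  Set.ncard { x : ι → ℤ | (fun k => (x k : ℝ)) ∈ (t : ℝ) • P }

/-- The Ehrhart series of `P` as a formal power series. -/
noncomputable def ehrhartSeries {ι : Type*} (P : Set (ι → ℝ)) : PowerSeries ℚ :=
  PowerSeries.mk fun t => if t = 0 then 1 else (latticePointCount P t : ℚ)

/-- `h` is the `h^*`-polynomial of the `d`-dimensional lattice polytope `P`:
`Ehr(P; z) = h(z) / (1-z)^(d+1)` as formal power series. -/
def IsHStarPoly {ι : Type*} (P : Set (ι → ℝ)) (d : ℕ) (h : Polynomial ℚ) : Prop :=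
  ehrhartSeries P * (1 - PowerSeries.X) ^ (d + 1) = (h : PowerSeries ℚ)

/-- Adjacency relation of the multigraph given by `ends`. -/
def multigraphAdj {V E : Type*} (ends : E → Sym2 V) (i j : V) : Prop :=
  ∃ f, ends f = s(i, j)

/-- Reachability in the multigraph given by `ends`. -/
def multigraphReach {V E : Type*} (ends : E → Sym2 V) : V → V → Prop :=
  Relation.ReflTransGen (multigraphAdj ends)

/-- The number of connected components of the multigraph given by `ends`. -/
noncomputable def numComponents {V E : Type*} (ends : E → Sym2 V) : ℕ :=
  Nat.card (Quot (multigraphReach ends))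


section GF

/-- Finite fibres. -/
def FinFib {X : Type*} (d : X → ℕ) : Prop := ∀ t, (d ⁻¹' {t}).Finite

/-- Weighted generating function of a graded set. -/
noncomputable def wgf {X : Type*} (d : X → ℕ) (w : X → ℚ) : PowerSeries ℚ :=
  PowerSeries.mk fun t => ∑ᶠ x ∈ d ⁻¹' {t}, w x

theorem coeff_wgf {X : Type*} {d : X → ℕ} (h : FinFib d) (w : X → ℚ) (t : ℕ) :
    PowerSeries.coeff t (wgf d w) = ∑ x ∈ (h t).toFinset, w x := by
  rw [wgf, PowerSeries.coeff_mk, finsum_mem_eq_finite_toFinset_sum]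

theorem wgf_add {X : Type*} {d : X → ℕ} (h : FinFib d) (w w' : X → ℚ) :
    wgf d (fun x => w x + w' x) = wgf d w + wgf d w' := by
  ext t
  rw [map_add, coeff_wgf h, coeff_wgf h, coeff_wgf h, Finset.sum_add_distrib]

theorem wgf_smul {X : Type*} {d : X → ℕ} (h : FinFib d) (r : ℚ) (w : X → ℚ) :
    wgf d (fun x => r * w x) = PowerSeries.C r * wgf d w := by
  ext t
  rw [PowerSeries.coeff_C_mul, coeff_wgf h, coeff_wgf h, Finset.mul_sum]

theorem FinFib.inj {X Y : Type*} {d : X → ℕ} {d' : Y → ℕ} (h : FinFib d) (e : Y → X)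
    (he : Function.Injective e) (hd : ∀ y, d (e y) = d' y) : FinFib d' := by
  intro t
  have : d' ⁻¹' {t} = e ⁻¹' (d ⁻¹' {t}) := by
    ext y; simp [hd]
  rw [this]
  exact (h t).preimage he.injOn

theorem wgf_inj {X Y : Type*} {d : X → ℕ} {d' : Y → ℕ} (h : FinFib d) (e : Y → X)
    (he : Function.Injective e) (hd : ∀ y, d (e y) = d' y) (w : X → ℚ) (w' : Y → ℚ)
    (hw : ∀ y, w (e y) = w' y) (h0 : ∀ x, x ∉ Set.range e → w x = 0) :
    wgf d' w' = wgf d w := by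
  ext t
  rw [coeff_wgf (h.inj e he hd), coeff_wgf h]
  refine Finset.sum_of_injOn e he.injOn ?_ ?_ ?_
  · intro y hy
    simp at hy ⊢
    rw [hd, hy]
  · intro x hx hx'
    apply h0
    rintro ⟨y, rfl⟩
    apply hx'
    simp at hx ⊢
    exact ⟨y, by rw [← hd, hx], rfl⟩
  · intro y _
    exact (hw y).symm

theorem FinFib.prod {X Y : Type*} {d : X → ℕ} {d' : Y → ℕ} (h : FinFib d) (h' : FinFib d') :
    FinFib (fun p : X × Y => d p.1 + d' p.2) := by
  intro t
  apply ((Finset.finite_toSet (Finset.HasAntidiagonal.antidiagonal t)).biUnion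
    (t := fun ij => (d ⁻¹' {ij.1}) ×ˢ (d' ⁻¹' {ij.2})) (fun ij _ => (h _).prod (h' _))).subset
  rintro ⟨x, y⟩ hxy
  simp at hxy ⊢
  exact hxy

theorem wgf_prod {X Y : Type*} {d : X → ℕ} {d' : Y → ℕ} (h : FinFib d) (h' : FinFib d')
    (w : X → ℚ) (w' : Y → ℚ) :
    wgf (fun p : X × Y => d p.1 + d' p.2) (fun p => w p.1 * w' p.2) = wgf d w * wgf d' w' := by
  ext t
  rw [coeff_wgf (h.prod h'), PowerSeries.coeff_mul]
  rw [← Finset.sum_fiberwise_of_maps_to (s := ((h.prod h') t).toFinset)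
    (t := Finset.HasAntidiagonal.antidiagonal t) (g := fun p : X × Y => (d p.1, d' p.2))]
  · refine Finset.sum_congr rfl fun ij hij => ?_
    rw [coeff_wgf h, coeff_wgf h', Finset.sum_mul_sum, ← Finset.sum_product']
    refine Finset.sum_congr ?_ fun _ _ => rfl
    ext ⟨x, y⟩
    simp at hij ⊢
    rw [Prod.ext_iff]
    simp
    omega
  · intro p hp
    simpa using hp

theorem finFib_nat : FinFib (fun k : ℕ => k) := fun t => by simp

theorem wgf_nat : wgf (fun k : ℕ => k) (fun _ => 1) * (1 - PowerSeries.X) = 1 := by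
  have : wgf (fun k : ℕ => k) (fun _ => 1) = PowerSeries.mk 1 := by
    ext t
    rw [coeff_wgf finFib_nat, PowerSeries.coeff_mk]
    simp
  rw [this]
  exact PowerSeries.mk_one_mul_one_sub_eq_one ℚ

theorem finFib_int : FinFib (fun k : ℤ => k.natAbs) := fun t => by
  apply (Set.finite_Icc (-(t:ℤ)) t).subset
  intro x hx
  simp at hx ⊢
  omega

theorem int_fib (t : ℕ) : (finFib_int t).toFinset = {(t : ℤ), -(t : ℤ)} := by
  ext x
  simp
  omega

theorem wgf_int : wgf (fun k : ℤ => k.natAbs) (fun _ => 1) * (1 - PowerSeries.X)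
    = 1 + PowerSeries.X := by
  ext t
  rcases t with _ | _ | t
  · simp [mul_sub]
    rw [← PowerSeries.coeff_zero_eq_constantCoeff_apply, coeff_wgf finFib_int, int_fib]
    simp
  · simp [coeff_wgf finFib_int, int_fib, mul_sub, PowerSeries.coeff_one]
    norm_num
  · simp [coeff_wgf finFib_int, int_fib, mul_sub, PowerSeries.coeff_one, PowerSeries.coeff_succ_mul_X, PowerSeries.coeff_X]
    rw [Finset.card_pair (by omega), Finset.card_pair (by omega)]; norm_num

theorem wgf_int' : wgf (fun k : ℤ => k.natAbs) (fun k => (k.toNat : ℚ)) * (1 - PowerSeries.X) ^ 2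
    = PowerSeries.X := by
  have key : ∀ t, PowerSeries.coeff t (wgf (fun k : ℤ => k.natAbs) (fun k => (k.toNat : ℚ))) = t := by
    intro t
    rw [coeff_wgf finFib_int, int_fib]
    rcases t with _ | t
    · simp
    · rw [Finset.sum_pair (by omega)]
      simp
  have : (1 - PowerSeries.X : PowerSeries ℚ) ^ 2 = 1 - PowerSeries.X - PowerSeries.X + PowerSeries.X * PowerSeries.X := by ring
  rw [this, mul_add, mul_sub, mul_sub, mul_one, ← mul_assoc]
  ext t
  rcases t with _ | _ | t
  · simp
    rw [← PowerSeries.coeff_zero_eq_constantCoeff_apply, key]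
    simp
  · simp [key, PowerSeries.coeff_succ_mul_X]
  · simp [key, PowerSeries.coeff_succ_mul_X, PowerSeries.coeff_X]

/-- ℓ¹ norm -/
def absSum {a : ℕ} (y : Fin a → ℤ) : ℕ := ∑ j, (y j).natAbs
/-- positive part -/
def posSum {a : ℕ} (y : Fin a → ℤ) : ℕ := ∑ j, (y j).toNat

theorem absSum_cons {a : ℕ} (p : ℤ × (Fin a → ℤ)) :
    absSum (Fin.consEquiv (fun _ => ℤ) p) = p.1.natAbs + absSum p.2 := by
  simp [absSum, Fin.sum_univ_succ, Fin.consEquiv]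

theorem posSum_cons {a : ℕ} (p : ℤ × (Fin a → ℤ)) :
    posSum (Fin.consEquiv (fun _ => ℤ) p) = p.1.toNat + posSum p.2 := by
  simp [posSum, Fin.sum_univ_succ, Fin.consEquiv]

theorem finFib_absSum (a : ℕ) : FinFib (absSum (a := a)) := by
  induction a with
  | zero => intro t; exact Set.toFinite _
  | succ a ih =>
    refine (finFib_int.prod ih).inj (Fin.consEquiv (fun _ => ℤ)).symm
      (Equiv.injective _) fun y => ?_
    rw [← absSum_cons, Equiv.apply_symm_apply]

theorem wgf_absSum (a : ℕ) : wgf (absSum (a := a)) (fun _ => 1) * (1 - PowerSeries.X) ^ a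
    = (1 + PowerSeries.X) ^ a := by
  induction a with
  | zero =>
    simp
    ext t
    rw [coeff_wgf (finFib_absSum 0), PowerSeries.coeff_one]
    by_cases h : t = 0
    · subst h; simp [absSum]
    · simp [h, absSum, Ne.symm h]
  | succ a ih =>
    have := wgf_inj (finFib_absSum (a+1)) (Fin.consEquiv (fun _ => ℤ)) (Equiv.injective _) (absSum_cons)
      (fun _ => 1) (fun _ => 1 * 1) (fun _ => by simp) (fun x hx => absurd ((Equiv.surjective _) x) hx)
    rw [← this, wgf_prod finFib_int (finFib_absSum a) (fun _ => 1) (fun _ => 1)]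
    rw [pow_succ, pow_succ, ← ih, ← wgf_int]
    ring

theorem wgf_posSum (a : ℕ) : wgf (absSum (a := a)) (fun y => (posSum y : ℚ)) * (1 - PowerSeries.X) ^ (a + 1)
    = (a : PowerSeries ℚ) * PowerSeries.X * (1 + PowerSeries.X) ^ (a - 1) := by
  induction a with
  | zero =>
    simp
    left
    ext t
    rw [coeff_wgf (finFib_absSum 0)]
    simp [posSum]
  | succ a ih =>
    have := wgf_inj (finFib_absSum (a+1)) (Fin.consEquiv (fun _ => ℤ)) (Equiv.injective _) (absSum_cons)
      (fun y => (posSum y : ℚ)) (fun p => (p.1.toNat : ℚ) * 1 + 1 * (posSum p.2 : ℚ))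
      (fun p => by rw [posSum_cons]; push_cast; ring) (fun x hx => absurd ((Equiv.surjective _) x) hx)
    rw [← this, wgf_add (finFib_int.prod (finFib_absSum a)),
      wgf_prod finFib_int (finFib_absSum a) (fun k => (k.toNat : ℚ)) (fun _ => 1),
      wgf_prod finFib_int (finFib_absSum a) (fun _ => 1) (fun y => (posSum y : ℚ))]
    have e : ∀ A B C D Z : PowerSeries ℚ, (A * B + C * D) * Z ^ (a + 1 + 1) =
      (A * Z ^ 2) * (B * Z ^ a) + (C * Z) * (D * Z ^ (a+1)) := by intros; ring
    rw [e, wgf_int', wgf_int, wgf_absSum, ih]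
    rcases a with _ | a
    · simp
    · simp
      ring

/-- block degree -/
def blockDeg {a : ℕ} (p : (Fin a → ℤ) × ℕ) : ℕ := absSum p.1 + (p.2 - 2 * posSum p.1)

theorem posSum_le_absSum {a : ℕ} (y : Fin a → ℤ) : posSum y ≤ absSum y :=
  Finset.sum_le_sum fun j _ => by omega

theorem finFib_blockDeg (a : ℕ) : FinFib (blockDeg (a := a)) := by
  intro t
  have h1 : (⋃ s ∈ Set.Iic t, (absSum (a := a)) ⁻¹' {s}).Finite :=
    (Set.finite_Iic t).biUnion fun s _ => finFib_absSum a s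
  apply (h1.prod (Set.finite_Iic (3 * t))).subset
  rintro ⟨y, u⟩ h
  have := posSum_le_absSum y
  simp [blockDeg] at h ⊢
  omega

theorem wgf_blockDeg (a : ℕ) : wgf (blockDeg (a := a)) (fun _ => 1) * (1 - PowerSeries.X) ^ (a + 1)
    = (1 + PowerSeries.X) ^ a + 2 * (a : PowerSeries ℚ) * PowerSeries.X * (1 + PowerSeries.X) ^ (a - 1) := by
  have h1 : wgf (blockDeg (a := a)) (fun _ => 1) =
      wgf (blockDeg (a := a)) (fun p => if p.2 < 2 * posSum p.1 then 1 else 0) +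
      wgf (blockDeg (a := a)) (fun p => if p.2 < 2 * posSum p.1 then 0 else 1) := by
    rw [← wgf_add (finFib_blockDeg a)]
    congr 1
    ext p
    split_ifs <;> simp
  have h2 : wgf (blockDeg (a := a)) (fun p => if p.2 < 2 * posSum p.1 then 0 else 1) =
      wgf (absSum (a := a)) (fun _ => 1) * wgf (fun k : ℕ => k) (fun _ => 1) := by
    rw [← wgf_prod (finFib_absSum a) finFib_nat]
    symm
    apply wgf_inj (finFib_blockDeg a) (fun p => (p.1, p.2 + 2 * posSum p.1))
    · rintro ⟨y, u⟩ ⟨y', u'⟩ h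
      simp at h
      obtain ⟨rfl, h⟩ := h
      simp at h
      simp [h]
    · rintro ⟨y, u⟩
      simp [blockDeg]
    · rintro ⟨y, u⟩
      simp
    · rintro ⟨y, u⟩ h
      simp
      by_contra! h'
      apply h
      exact ⟨(y, u - 2 * posSum y), by simp; omega⟩
  have h3 : wgf (blockDeg (a := a)) (fun p => if p.2 < 2 * posSum p.1 then 1 else 0) =
      PowerSeries.C 2 * wgf (absSum (a := a)) (fun y => (posSum y : ℚ)) := by
    rw [← wgf_smul (finFib_absSum a)]
    ext t
    rw [coeff_wgf (finFib_blockDeg a), coeff_wgf (finFib_absSum a), ← Finset.sum_filter]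
    rw [← Finset.sum_fiberwise_of_maps_to (t := (finFib_absSum a t).toFinset) (g := fun p => p.1)]
    · refine Finset.sum_congr rfl fun y hy => ?_
      simp at hy
      simp only [Finset.sum_const, nsmul_eq_mul, mul_one]
      have : (Finset.filter (fun i => i.1 = y)
         (Finset.filter (fun p : (Fin a → ℤ) × ℕ => p.2 < 2 * posSum p.1) (finFib_blockDeg a t).toFinset)) =
         ({y} : Finset (Fin a → ℤ)) ×ˢ Finset.range (2 * posSum y) := by
        ext ⟨y', u⟩
        simp [blockDeg]
        constructor
        · rintro ⟨⟨_, h⟩, rfl⟩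
          exact ⟨h, rfl⟩
        · rintro ⟨h, rfl⟩
          exact ⟨⟨by omega, h⟩, rfl⟩
      rw [this]
      simp
    · rintro ⟨y, u⟩ h
      simp [blockDeg] at h ⊢
      omega
  rw [h1, h2, h3, add_mul]
  have : ∀ A B Z : PowerSeries ℚ, A * B * Z ^ (a + 1) = A * Z ^ a * (B * Z) := by intros; ring
  rw [this (wgf (absSum (a := a)) (fun _ => 1)), wgf_absSum, wgf_nat, mul_assoc, wgf_posSum]
  have : (PowerSeries.C 2 : PowerSeries ℚ) = 2 := map_ofNat _ 2
  rw [this]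
  ring

end GF
section Geo

variable {ι : Type*} [DecidableEq ι]

/-- Lower bound for the coordinate at the gluing vertex. -/
def lo {R : Type*} [CommRing R] [LinearOrder R] {a : ℕ} (q : R) (y : Fin a → R) : R :=
  max (-∑ j, y j) (2 * ∑ j, max (-y j) 0 - q)

/-- A point supported on a block. -/
def pt {R : Type*} [CommRing R] {a : ℕ} (v c : ι) (F : Fin a → ι) (s q : R) (y : Fin a → R) : ι → R :=
  Pi.single v s + Pi.single c q + ∑ j, Pi.single (F j) (y j)

/-- Generators of a block. -/
def blockGens {a : ℕ} (v c : ι) (F : Fin a → ι) : Set (ι → ℝ) :=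
  { x | ∃ j, x = Pi.single v 1 + Pi.single c 1 - Pi.single (F j) 1 ∨
      x = Pi.single v 1 - Pi.single c 1 + Pi.single (F j) 1 ∨
      x = -Pi.single v 1 + Pi.single c 1 + Pi.single (F j) 1 }

theorem rsmul_mem {M : Type*} [AddCommGroup M] [Module ℝ M] (C : Submodule NNReal M) {r : ℝ} (hr : 0 ≤ r)
    {x : M} (hx : x ∈ C) : r • x ∈ C := C.smul_mem ⟨r, hr⟩ hx

theorem single_eq_smul (i : ι) (r : ℝ) : (Pi.single i r : ι → ℝ) = r • Pi.single i 1 := by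
  rw [← Pi.single_smul]; simp

theorem single_c_mem {a : ℕ} {v c : ι} {F : Fin a → ι} (j : Fin a) :
    (Pi.single c 1 : ι → ℝ) ∈ Submodule.span NNReal (blockGens v c F) := by
  have h1 : (Pi.single v 1 + Pi.single c 1 - Pi.single (F j) 1 : ι → ℝ) ∈
    Submodule.span NNReal (blockGens v c F) := Submodule.subset_span ⟨j, Or.inl rfl⟩
  have h2 : (-Pi.single v 1 + Pi.single c 1 + Pi.single (F j) 1 : ι → ℝ) ∈
    Submodule.span NNReal (blockGens v c F) := Submodule.subset_span ⟨j, Or.inr (Or.inr rfl)⟩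
  have := rsmul_mem _ (by norm_num : (0:ℝ) ≤ 1/2) (Submodule.add_mem _ h1 h2)
  convert this using 1
  module

theorem pt_mem {a : ℕ} (ha : 1 ≤ a) {v c : ι} {F : Fin a → ι} (q : ℝ) (y : Fin a → ℝ)
    (h : -∑ j, y j ≤ q) :
    pt v c F (lo q y) q y ∈ Submodule.span NNReal (blockGens v c F) := by
  set C := Submodule.span NNReal (blockGens v c F) with hC
  set p := ∑ j, max (y j) 0 with hp
  set m := ∑ j, max (-y j) 0 with hm
  have hp0 : 0 ≤ p := Finset.sum_nonneg fun j _ => le_max_right _ _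
  have hy : ∀ j, y j = max (y j) 0 - max (-y j) 0 := fun j => by
    rcases le_total (y j) 0 with h | h
    · rw [max_eq_right h, max_eq_left (by linarith)]; ring
    · rw [max_eq_left h, max_eq_right (by linarith)]; ring
  have hys : ∑ j, y j = p - m := by
    rw [hp, hm, ← Finset.sum_sub_distrib]
    exact Finset.sum_congr rfl fun j _ => hy j
  obtain ⟨θ, ρ, h1, h2, h3, h4, h5⟩ : ∃ θ ρ : ℝ, -1 ≤ θ ∧ θ ≤ 1 ∧ 0 ≤ ρ ∧ lo q y - m = -(p * θ) ∧
      q - m = p * θ + ρ := by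
    unfold lo
    rw [hys] at h ⊢
    rw [← hm]
    rcases le_total (q - m) p with h' | h'
    · rw [max_eq_right (by linarith)]
      rcases hp0.eq_or_lt with h0 | h0
      · refine ⟨0, 0, by norm_num, by norm_num, le_rfl, ?_, ?_⟩ <;> linarith
      · refine ⟨(q - m) / p, 0, ?_, ?_, le_rfl, ?_, ?_⟩
        · rw [le_div_iff₀ h0]; linarith
        · rw [div_le_iff₀ h0]; linarith
        · field_simp; ring
        · field_simp; ring
    · rw [max_eq_left (by linarith)]
      exact ⟨1, q - m - p, by norm_num, le_rfl, by linarith, by ring, by ring⟩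
  have e : pt v c F (lo q y) q y = ∑ j, (max (-y j) 0 • (Pi.single v 1 + Pi.single c 1 - Pi.single (F j) 1)
      + max (y j) 0 • (((1 - θ) / 2) • (Pi.single v 1 - Pi.single c 1 + Pi.single (F j) 1) +
        ((1 + θ) / 2) • (-Pi.single v 1 + Pi.single c 1 + Pi.single (F j) 1))) + ρ • (Pi.single c 1 : ι → ℝ) := by
    have e1 : ∀ j, (max (-y j) 0 • (Pi.single v 1 + Pi.single c 1 - Pi.single (F j) 1)
      + max (y j) 0 • (((1 - θ) / 2) • (Pi.single v 1 - Pi.single c 1 + Pi.single (F j) 1) +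
        ((1 + θ) / 2) • (-Pi.single v 1 + Pi.single c 1 + Pi.single (F j) 1)) : ι → ℝ) =
        max (-y j) 0 • (Pi.single v 1 + Pi.single c 1) + max (y j) 0 • (θ • (Pi.single c 1 - Pi.single v 1))
        + (Pi.single (F j) (y j) : ι → ℝ) := by
      intro j
      rw [single_eq_smul (F j) (y j)]
      have hj := hy j
      generalize max (y j) 0 = A at hj ⊢
      generalize max (-y j) 0 = B at hj ⊢
      rw [hj]
      module
    rw [Finset.sum_congr rfl fun j _ => e1 j, Finset.sum_add_distrib, Finset.sum_add_distrib,
      ← Finset.sum_smul, ← Finset.sum_smul, ← hp, ← hm, pt, single_eq_smul v (lo q y), single_eq_smul c q]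
    have e2 : lo q y = m - p * θ := by linarith
    have e3 : q = m + p * θ + ρ := by linarith
    rw [e2]
    nth_rewrite 1 [e3]
    module
  rw [e]
  refine Submodule.add_mem _ (Submodule.sum_mem _ fun j _ => Submodule.add_mem _ ?_ ?_) ?_
  · exact rsmul_mem _ (le_max_right _ _) (Submodule.subset_span ⟨j, Or.inl rfl⟩)
  · refine rsmul_mem _ (le_max_right _ _) (Submodule.add_mem _ ?_ ?_)
    · exact rsmul_mem _ (by linarith) (Submodule.subset_span ⟨j, Or.inr (Or.inl rfl)⟩)
    · exact rsmul_mem _ (by linarith) (Submodule.subset_span ⟨j, Or.inr (Or.inr rfl)⟩)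
  · exact rsmul_mem _ h3 (single_c_mem ⟨0, ha⟩)

theorem pt_add {R : Type*} [CommRing R] {a : ℕ} (v c : ι) (F : Fin a → ι) (s q s' q' : R) (y y' : Fin a → R) :
    pt v c F (s + s') (q + q') (y + y') = pt v c F s q y + pt v c F s' q' y' := by
  simp only [pt, Pi.single_add, Pi.add_apply, Finset.sum_add_distrib]
  abel

theorem pt_smul {a : ℕ} (v c : ι) (F : Fin a → ι) (r s q : ℝ) (y : Fin a → ℝ) :
    pt v c F (r * s) (r * q) (r • y) = r • pt v c F s q y := by
  simp only [pt, smul_add, Finset.smul_sum, ← Pi.single_smul, smul_eq_mul, Pi.smul_apply]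

theorem pt_shift {R : Type*} [CommRing R] {a : ℕ} (v c : ι) (F : Fin a → ι) (r s q : R) (y : Fin a → R) :
    pt v c F (r + s) q y = Pi.single v r + pt v c F s q y := by
  simp only [pt, Pi.single_add]
  abel

theorem lo_add {a : ℕ} (q q' : ℝ) (y y' : Fin a → ℝ) :
    lo (q + q') (y + y') ≤ lo q y + lo q' y' := by
  have : ∑ j, max (-(y j + y' j)) 0 ≤ ∑ j, max (-y j) 0 + ∑ j, max (-y' j) 0 := by
    rw [← Finset.sum_add_distrib]
    refine Finset.sum_le_sum fun j _ => ?_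
    have h1 := le_max_left (-y j) 0
    have h2 := le_max_left (-y' j) 0
    have h3 := le_max_right (-y j) 0
    have h4 := le_max_right (-y' j) 0
    exact max_le (by linarith) (by linarith)
  unfold lo
  simp only [Pi.add_apply, Finset.sum_add_distrib]
  refine max_le ?_ ?_
  · have h1 := le_max_left (-∑ j, y j) (2 * ∑ j, max (-y j) 0 - q)
    have h2 := le_max_left (-∑ j, y' j) (2 * ∑ j, max (-y' j) 0 - q')
    linarith
  · have h1 := le_max_right (-∑ j, y j) (2 * ∑ j, max (-y j) 0 - q)
    have h2 := le_max_right (-∑ j, y' j) (2 * ∑ j, max (-y' j) 0 - q')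
    linarith

theorem lo_smul {a : ℕ} (r : ℝ) (hr : 0 ≤ r) (q : ℝ) (y : Fin a → ℝ) :
    lo (r * q) (r • y) = r * lo q y := by
  unfold lo
  rw [mul_max_of_nonneg _ _ hr]
  have : ∀ j, max (-(r • y) j) 0 = r * max (-y j) 0 := fun j => by
    rw [mul_max_of_nonneg _ _ hr]; simp
  simp only [this]
  simp only [← Finset.mul_sum, Pi.smul_apply, smul_eq_mul]
  congr 1 <;> ring

theorem span_form {a : ℕ} {v c : ι} {F : Fin a → ι} {x : ι → ℝ}
    (hx : x ∈ Submodule.span NNReal (blockGens v c F)) :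
    ∃ (r q : ℝ) (y : Fin a → ℝ), 0 ≤ r ∧ -∑ j, y j ≤ q ∧ x = Pi.single v r + pt v c F (lo q y) q y := by
  induction hx using Submodule.span_induction with
  | zero => exact ⟨0, 0, 0, le_rfl, by simp, by simp [pt, lo]⟩
  | add x x' _ _ h h' =>
    obtain ⟨r, q, y, hr, hq, rfl⟩ := h
    obtain ⟨r', q', y', hr', hq', rfl⟩ := h'
    refine ⟨r + r' + (lo q y + lo q' y' - lo (q + q') (y + y')), q + q', y + y', ?_, ?_, ?_⟩
    · have := lo_add q q' y y'
      linarith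
    · simp only [Pi.add_apply, Finset.sum_add_distrib]
      linarith
    · rw [← pt_shift, ← pt_shift, ← pt_shift, ← pt_add]
      congr 1
      ring
  | smul s x _ h =>
    obtain ⟨r, q, y, hr, hq, rfl⟩ := h
    have hs : (0:ℝ) ≤ s := s.2
    refine ⟨s * r, s * q, (s:ℝ) • y, by positivity, ?_, ?_⟩
    · simp only [Pi.smul_apply, smul_eq_mul, ← Finset.mul_sum]
      have := mul_le_mul_of_nonneg_left hq hs
      linarith
    · rw [lo_smul _ hs, pt_smul, NNReal.smul_def, smul_add, ← Pi.single_smul, smul_eq_mul]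
  | mem x h =>
    obtain ⟨j, h | h | h⟩ := h
    · refine ⟨0, 1, Pi.single j (-1), le_rfl, by simp, ?_⟩
      rw [h]
      have : ∀ i, max (-(Pi.single j (-1:ℝ) : Fin a → ℝ) i) 0 = (Pi.single j 1 : Fin a → ℝ) i := by
        intro i
        by_cases hi : i = j
        · subst hi; simp
        · simp [hi]
      have e : lo 1 (Pi.single j (-1:ℝ) : Fin a → ℝ) = 1 := by
        simp only [lo, this]
        simp; norm_num
      have e2 : ∑ i, (Pi.single (F i) ((Pi.single j (-1:ℝ) : Fin a → ℝ) i) : ι → ℝ) = Pi.single (F j) (-1) := by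
        rw [Finset.sum_eq_single j] <;> simp +contextual
      rw [pt, e, e2, Pi.single_neg]
      simp [sub_eq_add_neg]
    · refine ⟨0, -1, Pi.single j 1, le_rfl, by simp, ?_⟩
      rw [h]
      have : ∀ i, max (-(Pi.single j (1:ℝ) : Fin a → ℝ) i) 0 = 0 := by
        intro i
        by_cases hi : i = j
        · subst hi; simp
        · simp [hi]
      have e : lo (-1) (Pi.single j (1:ℝ) : Fin a → ℝ) = 1 := by
        simp only [lo, this]
        simp
      have e2 : ∑ i, (Pi.single (F i) ((Pi.single j (1:ℝ) : Fin a → ℝ) i) : ι → ℝ) = Pi.single (F j) (1) := by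
        rw [Finset.sum_eq_single j] <;> simp +contextual
      rw [pt, e, e2, Pi.single_neg]
      simp [sub_eq_add_neg]
    · refine ⟨0, 1, Pi.single j 1, le_rfl, by simp, ?_⟩
      rw [h]
      have : ∀ i, max (-(Pi.single j (1:ℝ) : Fin a → ℝ) i) 0 = 0 := by
        intro i
        by_cases hi : i = j
        · subst hi; simp
        · simp [hi]
      have e : lo 1 (Pi.single j (1:ℝ) : Fin a → ℝ) = -1 := by
        simp only [lo, this]
        simp
      have e2 : ∑ i, (Pi.single (F i) ((Pi.single j (1:ℝ) : Fin a → ℝ) i) : ι → ℝ) = Pi.single (F j) (1) := by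
        rw [Finset.sum_eq_single j] <;> simp +contextual
      rw [pt, e, e2, Pi.single_neg]
      simp

end Geo
section Step

variable {ι : Type*} [DecidableEq ι]

/-- Integer points of a cone. -/
abbrev Zpt (K : Submodule NNReal (ι → ℝ)) : Type _ := {x : ι → ℤ // (fun k => (x k : ℝ)) ∈ K}

/-- Degree: the coordinate sum. -/
def degZ [Fintype ι] (K : Submodule NNReal (ι → ℝ)) (x : Zpt K) : ℕ := (∑ k, x.1 k).toNat

/-- Inductive package. -/
structure GoodCone [Fintype ι] (K : Submodule NNReal (ι → ℝ)) (A : Set ι) (N : ℕ) (h : PowerSeries ℚ) : Prop where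
  supp : ∀ x ∈ K, ∀ i ∉ A, x i = 0
  nonneg : ∀ x ∈ K, 0 ≤ ∑ i, x i
  fin : FinFib (degZ K)
  gf : wgf (degZ K) (fun _ => 1) * (1 - PowerSeries.X) ^ N = h

theorem pt_cast {a : ℕ} (v c : ι) (F : Fin a → ι) (s q : ℤ) (y : Fin a → ℤ) :
    (fun k => ((pt v c F s q y k : ℤ) : ℝ)) = pt v c F (s : ℝ) (q : ℝ) (fun j => (y j : ℝ)) := by
  have hs : ∀ (i : ι) (z : ℤ) (k : ι), (((Pi.single i z : ι → ℤ) k : ℤ) : ℝ) = (Pi.single i (z : ℝ) : ι → ℝ) k := by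
    intro i z k
    by_cases h : k = i
    · subst h; simp
    · simp [h]
  ext k
  simp [pt, hs]

theorem lo_cast {a : ℕ} (q : ℤ) (y : Fin a → ℤ) :
    ((lo q y : ℤ) : ℝ) = lo (q : ℝ) (fun j => (y j : ℝ)) := by
  simp [lo]

theorem pt_c {R : Type*} [CommRing R] {a : ℕ} {v c : ι} {F : Fin a → ι} (hvc : v ≠ c) (hF : ∀ j, F j ≠ c)
    (s q : R) (y : Fin a → R) : pt v c F s q y c = q := by
  have : ∀ j, (Pi.single (F j) (y j) : ι → R) c = 0 := fun j => Pi.single_eq_of_ne (hF j).symm _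
  simp [pt, hvc.symm, this]

theorem pt_F {R : Type*} [CommRing R] {a : ℕ} {v c : ι} {F : Fin a → ι} (hi : Function.Injective F)
    (hFv : ∀ j, F j ≠ v) (hF : ∀ j, F j ≠ c)
    (s q : R) (y : Fin a → R) (j : Fin a) : pt v c F s q y (F j) = y j := by
  have : ∑ i, (Pi.single (F i) (y i) : ι → R) (F j) = y j := by
    rw [Finset.sum_eq_single j]
    · simp
    · intro b _ hb
      exact Pi.single_eq_of_ne (fun h => hb (hi h).symm) _
    · simp
  simp [pt, hFv, hF, this]

theorem pt_ne {R : Type*} [CommRing R] {a : ℕ} {v c : ι} {F : Fin a → ι} (i : ι) (hv : i ≠ v) (hc : i ≠ c)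
    (hF : ∀ j, F j ≠ i)
    (s q : R) (y : Fin a → R) : pt v c F s q y i = 0 := by
  have : ∀ j, (Pi.single (F j) (y j) : ι → R) i = 0 := fun j => Pi.single_eq_of_ne (hF j).symm _
  simp [pt, hv, hc, this]

theorem pt_sum [Fintype ι] {R : Type*} [CommRing R] {a : ℕ} (v c : ι) (F : Fin a → ι)
    (s q : R) (y : Fin a → R) : ∑ i, pt v c F s q y i = s + q + ∑ j, y j := by
  simp only [pt, Pi.add_apply, Finset.sum_apply, Finset.sum_add_distrib]
  rw [Finset.sum_comm]
  simp

theorem lo_deg {a : ℕ} (y : Fin a → ℤ) (u : ℕ) :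
    lo ((u : ℤ) - ∑ j, y j) y + u = blockDeg (y, u) := by
  have h1 : ∑ j, y j = (posSum y : ℤ) - ∑ j, max (-y j) 0 := by
    simp only [posSum, Nat.cast_sum, ← Finset.sum_sub_distrib]
    exact Finset.sum_congr rfl fun j _ => by omega
  have h2 : (absSum y : ℤ) = posSum y + ∑ j, max (-y j) 0 := by
    simp only [posSum, absSum, Nat.cast_sum, ← Finset.sum_add_distrib]
    exact Finset.sum_congr rfl fun j _ => by omega
  simp only [lo, blockDeg]
  push_cast
  rw [h2, h1]
  generalize ∑ j, max (-y j) 0 = m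
  omega

theorem GoodCone.step [Fintype ι] {K : Submodule NNReal (ι → ℝ)} {A : Set ι} {N : ℕ} {h : PowerSeries ℚ}
    (g : GoodCone K A N h) {a : ℕ} (ha : 1 ≤ a) {v c : ι} {F : Fin a → ι} (hv : v ∈ A) (hc : c ∉ A)
    (hFi : Function.Injective F) (hFA : ∀ j, F j ∉ A) (hFc : ∀ j, F j ≠ c)
    (hvK : (Pi.single v 1 : ι → ℝ) ∈ K) :
    GoodCone (K ⊔ Submodule.span NNReal (blockGens v c F)) (A ∪ {c} ∪ Set.range F) (N + (a + 1))
      (h * ((1 + PowerSeries.X) ^ a +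
        2 * (a : PowerSeries ℚ) * PowerSeries.X * (1 + PowerSeries.X) ^ (a - 1))) := by
  have hvc : v ≠ c := fun e => hc (e ▸ hv)
  have hFv : ∀ j, F j ≠ v := fun j e => hFA j (e ▸ hv)
  set L := K ⊔ Submodule.span NNReal (blockGens v c F) with hL
  -- membership
  have form : ∀ x ∈ L, ∃ x' ∈ K, ∃ (q : ℝ) (y : Fin a → ℝ), -∑ j, y j ≤ q ∧ x = x' + pt v c F (lo q y) q y := by
    intro x hx
    obtain ⟨x1, hx1, x2, hx2, rfl⟩ := Submodule.mem_sup.1 hx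
    obtain ⟨r, q, y, hr, hq, rfl⟩ := span_form hx2
    refine ⟨x1 + Pi.single v r, Submodule.add_mem _ hx1 ?_, q, y, hq, by abel⟩
    rw [single_eq_smul]
    exact rsmul_mem _ hr hvK
  have mem : ∀ x' ∈ K, ∀ (q : ℝ) (y : Fin a → ℝ), -∑ j, y j ≤ q → x' + pt v c F (lo q y) q y ∈ L := by
    intro x' hx' q y hq
    exact Submodule.add_mem_sup hx' (pt_mem ha q y hq)
  -- the bijection
  let f : Zpt K × ((Fin a → ℤ) × ℕ) → Zpt L := fun p =>
    ⟨p.1.1 + pt v c F (lo ((p.2.2 : ℤ) - ∑ j, p.2.1 j) p.2.1) ((p.2.2 : ℤ) - ∑ j, p.2.1 j) p.2.1, by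
      have := mem _ p.1.2 ((((p.2.2 : ℤ) - ∑ j, p.2.1 j : ℤ)) : ℝ) (fun j => (p.2.1 j : ℝ)) (by push_cast; linarith [(Nat.cast_nonneg p.2.2 : (0:ℝ) ≤ _)])
      rw [← lo_cast, ← pt_cast] at this
      convert this using 1
      ext k
      simp⟩
  have hK0 : ∀ (x : Zpt K) (i : ι), i ∉ A → x.1 i = 0 := fun x i hi => by
    exact_mod_cast g.supp _ x.2 i hi
  have hinj : Function.Injective f := by
    rintro ⟨x, y, u⟩ ⟨x', y', u'⟩ e
    have e' := congrArg Subtype.val e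
    simp only [f] at e'
    have ey : y = y' := by
      ext j
      have := congrFun e' (F j)
      simpa [pt_F hFi hFv hFc, hK0 _ _ (hFA j)] using this
    subst ey
    have eu : u = u' := by
      have := congrFun e' c
      simpa [pt_c hvc hFc, hK0 _ _ hc] using this
    subst eu
    have ex : x = x' := Subtype.ext (by simpa using e')
    rw [ex]
  have hsurj : Function.Surjective f := by
    rintro ⟨x, hx⟩
    obtain ⟨x', hx', q, y, hq, e⟩ := form _ hx
    have hqx : q = ((x c : ℤ) : ℝ) := by
      have := congrFun e c
      simp only [Pi.add_apply, pt_c hvc hFc, g.supp _ hx' c hc] at this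
      rw [this, zero_add]
    have hyx : y = fun j => ((x (F j) : ℤ) : ℝ) := by
      ext j
      have := congrFun e (F j)
      simp only [Pi.add_apply, pt_F hFi hFv hFc, g.supp _ hx' _ (hFA j)] at this
      rw [this, zero_add]
    subst hqx hyx
    have hu : 0 ≤ x c + ∑ j, x (F j) := by
      have : -∑ j, x (F j) ≤ x c := by
        simp only at hq
        exact_mod_cast hq
      linarith
    obtain ⟨u, hu⟩ := Int.eq_ofNat_of_zero_le hu
    have hu' : (u : ℤ) - ∑ j, x (F j) = x c := by linarith
    rw [← lo_cast, ← pt_cast] at e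
    refine ⟨⟨⟨x - pt v c F (lo (x c) (fun j => x (F j))) (x c) (fun j => x (F j)), ?_⟩, fun j => x (F j), u⟩, ?_⟩
    · convert hx' using 1
      ext k
      have := congrFun e k
      simp at this ⊢
      linarith
    · apply Subtype.ext
      simp only [f, hu']
      simp
  have nonnegL : ∀ x ∈ L, 0 ≤ ∑ i, x i := by
    intro x hx
    obtain ⟨x', hx', q, y, hq, rfl⟩ := form x hx
    simp only [Pi.add_apply, Finset.sum_add_distrib, pt_sum]
    have h1 := g.nonneg x' hx'
    have h2 : 0 ≤ lo q y + q + ∑ j, y j := by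
      have e1 := le_max_left (-∑ j, y j) (2 * ∑ j, max (-y j) 0 - q)
      have e2 := le_max_right (-∑ j, y j) (2 * ∑ j, max (-y j) 0 - q)
      have e3 : -∑ j, y j ≤ ∑ j, max (-y j) 0 := by
        rw [← Finset.sum_neg_distrib]
        exact Finset.sum_le_sum fun j _ => le_max_left _ _
      have e4 : 0 ≤ ∑ j, max (-y j) 0 := Finset.sum_nonneg fun j _ => le_max_right _ _
      unfold lo
      linarith
    linarith
  have hdeg : ∀ p, degZ L (f p) = degZ K p.1 + blockDeg p.2 := by
    rintro ⟨x, y, u⟩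
    simp only [degZ, f, Pi.add_apply, Finset.sum_add_distrib, pt_sum]
    have h1 : (0:ℤ) ≤ ∑ i, x.1 i := by
      have := g.nonneg _ x.2
      exact_mod_cast this
    have h2 := lo_deg y u
    omega
  have hfinP := g.fin.prod (finFib_blockDeg a)
  let eqv := Equiv.ofBijective f ⟨hinj, hsurj⟩
  have hfin : FinFib (degZ L) := hfinP.inj eqv.symm eqv.symm.injective (fun x => by
    rw [← hdeg]
    exact congrArg _ (eqv.apply_symm_apply x))
  refine ⟨?_, nonnegL, hfin, ?_⟩
  · intro x hx i hi
    obtain ⟨x', hx', q, y, hq, rfl⟩ := form x hx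
    simp at hi
    have hiA : i ∉ A := fun h => hi.1.2 h
    rw [Pi.add_apply, g.supp x' hx' i hiA, pt_ne i (fun e => hiA (e ▸ hv)) hi.1.1 hi.2, add_zero]
  · have := wgf_inj hfin f hinj hdeg (fun _ => 1) (fun _ => 1 * 1) (fun _ => by simp)
      (fun x hx => absurd (hsurj x) hx)
    rw [← this, wgf_prod g.fin (finFib_blockDeg a) (fun _ => 1) (fun _ => 1), ← g.gf, ← wgf_blockDeg]
    ring

theorem goodCone_base [Fintype ι] (r : ι) :
    GoodCone (Submodule.span NNReal {(Pi.single r 1 : ι → ℝ)}) {r} 1 1 := by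
  have hm : ∀ x ∈ Submodule.span NNReal {(Pi.single r 1 : ι → ℝ)}, ∃ s : ℝ, 0 ≤ s ∧ x = Pi.single r s := by
    intro x hx
    obtain ⟨s, rfl⟩ := Submodule.mem_span_singleton.1 hx
    exact ⟨s, s.2, by rw [single_eq_smul r s]; rfl⟩
  let f : ℕ → Zpt (Submodule.span NNReal {(Pi.single r 1 : ι → ℝ)}) := fun k => ⟨Pi.single r (k : ℤ), by
    have : (fun i => (((Pi.single r (k:ℤ) : ι → ℤ) i : ℤ) : ℝ)) = (k : ℝ) • (Pi.single r 1 : ι → ℝ) := by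
      ext i
      by_cases h : i = r
      · subst h; simp
      · simp [h]
    rw [this]
    exact rsmul_mem _ (Nat.cast_nonneg k) (Submodule.mem_span_singleton_self _)⟩
  have hinj : Function.Injective f := by
    intro k k' e
    have := congrFun (congrArg Subtype.val e) r
    simpa [f] using this
  have hsurj : Function.Surjective f := by
    rintro ⟨x, hx⟩
    obtain ⟨s, hs, e⟩ := hm _ hx
    have h1 : (x r : ℝ) = s := by simpa using congrFun e r
    have h2 : 0 ≤ x r := by rw [← h1] at hs; exact_mod_cast hs
    obtain ⟨k, hk⟩ := Int.eq_ofNat_of_zero_le h2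
    refine ⟨k, Subtype.ext ?_⟩
    ext i
    by_cases h : i = r
    · subst h; simp [f, hk]
    · have := congrFun e i
      simp [h] at this
      simp [f, h, this]
  have hdeg : ∀ k, degZ _ (f k) = k := by
    intro k
    simp [degZ, f]
  let eqv := Equiv.ofBijective f ⟨hinj, hsurj⟩
  have hfin : FinFib (degZ (Submodule.span NNReal {(Pi.single r 1 : ι → ℝ)})) :=
    finFib_nat.inj eqv.symm eqv.symm.injective (fun x => by
      rw [← hdeg (eqv.symm x)]
      exact congrArg _ (eqv.apply_symm_apply x))
  refine ⟨?_, ?_, hfin, ?_⟩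
  · intro x hx i hi
    obtain ⟨s, hs, rfl⟩ := hm x hx
    simp at hi
    simp [hi]
  · intro x hx
    obtain ⟨s, hs, rfl⟩ := hm x hx
    simpa using hs
  · have := wgf_inj hfin f hinj hdeg (fun _ => 1) (fun _ => 1) (fun _ => rfl)
      (fun x hx => absurd (hsurj x) hx)
    rw [← this, pow_one, wgf_nat]

/-- Dilates of the convex hull versus the cone. -/
theorem mem_cone_iff [Fintype ι] {s : Set (ι → ℝ)} (hne : s.Nonempty) (h1 : ∀ x ∈ s, ∑ i, x i = 1)
    (t : ℝ) (ht : 0 ≤ t) (x : ι → ℝ) :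
    x ∈ t • convexHull ℝ s ↔ x ∈ Submodule.span NNReal s ∧ ∑ i, x i = t := by
  have hP : ∀ x ∈ convexHull ℝ s, x ∈ Submodule.span NNReal s ∧ ∑ i, x i = 1 := by
    have hcv : Convex ℝ {x : ι → ℝ | x ∈ Submodule.span NNReal s ∧ ∑ i, x i = 1} := by
      rintro x ⟨hx, hx'⟩ y ⟨hy, hy'⟩ p q hp hq hpq
      refine ⟨Submodule.add_mem _ (rsmul_mem _ hp hx) (rsmul_mem _ hq hy), ?_⟩
      simp [Finset.sum_add_distrib, ← Finset.mul_sum, hx', hy', hpq]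
    have hsub : s ⊆ {x : ι → ℝ | x ∈ Submodule.span NNReal s ∧ ∑ i, x i = 1} :=
      fun x hx => ⟨Submodule.subset_span hx, h1 x hx⟩
    exact fun x hx => convexHull_min hsub hcv hx
  constructor
  · rintro ⟨y, hy, rfl⟩
    obtain ⟨h, h'⟩ := hP y hy
    refine ⟨rsmul_mem _ ht h, ?_⟩
    simp [← Finset.mul_sum, h']
  · rintro ⟨hx, hs⟩
    have : ∃ r : ℝ, 0 ≤ r ∧ x ∈ r • convexHull ℝ s := by
      clear hs
      induction hx using Submodule.span_induction with
      | zero =>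
        obtain ⟨y, hy⟩ := hne
        exact ⟨0, le_rfl, y, subset_convexHull ℝ s hy, by simp⟩
      | mem x h => exact ⟨1, zero_le_one, x, subset_convexHull ℝ s h, by simp⟩
      | add x y _ _ h h' =>
        obtain ⟨r, hr, hx⟩ := h
        obtain ⟨r', hr', hy⟩ := h'
        refine ⟨r + r', add_nonneg hr hr', ?_⟩
        rw [(convex_convexHull ℝ s).add_smul hr hr']
        exact Set.add_mem_add hx hy
      | smul c x _ h =>
        obtain ⟨r, hr, y, hy, rfl⟩ := h
        exact ⟨c * r, mul_nonneg c.2 hr, y, hy, by rw [NNReal.smul_def]; simp [mul_smul]⟩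
    obtain ⟨r, hr, y, hy, rfl⟩ := this
    have h' := (hP y hy).2
    simp [← Finset.mul_sum, h'] at hs
    subst hs
    exact ⟨y, hy, rfl⟩

end Step
section Tree

variable {V : Type*} [DecidableEq V] {n : ℕ} {a : Fin n → ℕ}

/-- Building a tree by adding leaves. -/
inductive TreeBuild (φ : Fin n → Sym2 V) (r : V) : Finset V → Finset (Fin n) → Prop
  | base : TreeBuild φ r {r} ∅
  | step (W : Finset V) (S : Finset (Fin n)) (v c : V) (k : Fin n) :
      TreeBuild φ r W S → v ∈ W → c ∉ W → φ k = s(v, c) → TreeBuild φ r (insert c W) (insert k S)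

theorem TreeBuild.inv {φ : Fin n → Sym2 V} {r : V} {W : Finset V} {S : Finset (Fin n)}
    (h : TreeBuild φ r W S) : r ∈ W ∧ (∀ k ∈ S, ∀ x ∈ φ k, x ∈ W) ∧ W.card = S.card + 1 := by
  induction h with
  | base => simp
  | step W S v c k _ hv hc hk ih =>
    obtain ⟨h0, h1, h2⟩ := ih
    have hkS : k ∉ S := fun h => hc (h1 k h c (by simp [hk]))
    refine ⟨Finset.mem_insert_of_mem h0, ?_, ?_⟩
    · intro k' hk' x hx
      rcases Finset.mem_insert.1 hk' with rfl | hk'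
      · rw [hk] at hx
        rcases Sym2.mem_iff.1 hx with rfl | rfl
        · exact Finset.mem_insert_of_mem hv
        · exact Finset.mem_insert_self _ _
      · exact Finset.mem_insert_of_mem (h1 k' hk' x hx)
    · rw [Finset.card_insert_of_notMem hc, Finset.card_insert_of_notMem hkS, h2]

theorem exists_treeBuild [Fintype V] (T : SimpleGraph V) (htree : T.IsTree)
    (φ : Fin n → Sym2 V) (hφinj : Function.Injective φ)
    (hφmem : ∀ i, φ i ∈ T.edgeSet) (hφsurj : ∀ s ∈ T.edgeSet, ∃ i, φ i = s) (r : V) :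
    TreeBuild φ r Finset.univ Finset.univ ∧ Fintype.card V = n + 1 := by
  classical
  have hcard : Fintype.card V = n + 1 := by
    rw [← htree.card_edgeFinset]
    congr 1
    have : T.edgeFinset = Finset.univ.image φ := by
      ext s
      simp only [SimpleGraph.mem_edgeFinset, Finset.mem_image, Finset.mem_univ, true_and]
      exact ⟨hφsurj s, fun ⟨i, hi⟩ => hi ▸ hφmem i⟩
    rw [this, Finset.card_image_of_injective _ hφinj]
    simp
  refine ⟨?_, hcard⟩
  have hex : ∀ m, m ≤ n → ∃ W S, TreeBuild φ r W S ∧ S.card = m := by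
    intro m
    induction m with
    | zero => exact fun _ => ⟨_, _, TreeBuild.base, rfl⟩
    | succ m ih =>
      intro hm
      obtain ⟨W, S, hb, hS⟩ := ih (by omega)
      obtain ⟨hr, h1, h2⟩ := hb.inv
      obtain ⟨z, hz⟩ : ∃ z, z ∉ W := by
        by_contra! hall
        have : W = Finset.univ := Finset.eq_univ_iff_forall.2 hall
        rw [this, Finset.card_univ] at h2
        omega
      obtain ⟨p⟩ := htree.connected.preconnected r z
      obtain ⟨d, -, hd1, hd2⟩ := p.exists_boundary_dart (W : Set V) (by simpa using hr) (by simpa using hz)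
      obtain ⟨k, hk⟩ := hφsurj s(d.fst, d.snd) d.adj
      have hb' := TreeBuild.step W S d.fst d.snd k hb (by simpa using hd1) (by simpa using hd2) hk
      refine ⟨_, _, hb', ?_⟩
      have := hb'.inv.2.2
      rw [Finset.card_insert_of_notMem (by simpa using hd2)] at this
      omega
  obtain ⟨W, S, hb, hS⟩ := hex n le_rfl
  have hSu : S = Finset.univ := Finset.eq_univ_of_card S (by simp [hS])
  have hWu : W = Finset.univ := Finset.eq_univ_of_card W (by rw [hb.inv.2.2, hS, hcard])
  rwa [hSu, hWu] at hb

/-- Vertices coming from edges in blocks `S`. -/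
def partVerts (φ : Fin n → Sym2 V) (S : Finset (Fin n)) : Set ((V ⊕ (Σ i : Fin n, Fin (a i))) → ℝ) :=
  { x | ∃ (f : Σ i : Fin n, Fin (a i)) (i j : V), f.1 ∈ S ∧ φ f.1 = s(i, j) ∧
      (x = Pi.single (Sum.inl i) 1 + Pi.single (Sum.inl j) 1 - Pi.single (Sum.inr f) 1 ∨
       x = Pi.single (Sum.inl i) 1 - Pi.single (Sum.inl j) 1 + Pi.single (Sum.inr f) 1 ∨
       x = -Pi.single (Sum.inl i) 1 + Pi.single (Sum.inl j) 1 + Pi.single (Sum.inr f) 1) }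

/-- Embedding of a block of parallel edges. -/
def blockEmb (k : Fin n) (j : Fin (a k)) : V ⊕ (Σ i : Fin n, Fin (a i)) := Sum.inr ⟨k, j⟩

theorem partVerts_insert (φ : Fin n → Sym2 V) (S : Finset (Fin n)) (k : Fin n) (v c : V) (hk : φ k = s(v, c)) :
    partVerts (a := a) φ (insert k S) = partVerts φ S ∪
      blockGens (Sum.inl v) (Sum.inl c) (blockEmb (a := a) k) := by
  ext x
  constructor
  · rintro ⟨⟨k', j⟩, p, q, hf, he, hx⟩
    rcases Finset.mem_insert.1 hf with h | h
    · right
      simp only at h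
      subst h
      simp only at he
      rw [hk] at he
      refine ⟨j, ?_⟩
      rcases Sym2.eq_iff.1 he with ⟨rfl, rfl⟩ | ⟨rfl, rfl⟩
      · exact hx
      · rcases hx with rfl | rfl | rfl
        · left; unfold blockEmb; abel
        · right; right; unfold blockEmb; abel
        · right; left; unfold blockEmb; abel
    · exact Or.inl ⟨⟨k', j⟩, p, q, h, he, hx⟩
  · rintro (⟨f, p, q, hf, he, hx⟩ | ⟨j, hx⟩)
    · exact ⟨f, p, q, Finset.mem_insert_of_mem hf, he, hx⟩
    · exact ⟨⟨k, j⟩, v, c, Finset.mem_insert_self _ _, hk, hx⟩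

theorem TreeBuild.good [Fintype V] (ha : ∀ i, 1 ≤ a i) {φ : Fin n → Sym2 V} {r : V} {W : Finset V} {S : Finset (Fin n)}
    (h : TreeBuild φ r W S) :
    GoodCone (Submodule.span NNReal ({(Pi.single (Sum.inl r) 1)} ∪ partVerts (a := a) φ S))
      {i | Sum.elim (fun w => w ∈ W) (fun f => f.1 ∈ S) i} (W.card + ∑ k ∈ S, a k)
      (∏ k ∈ S, ((1 + PowerSeries.X) ^ (a k) +
        2 * (a k : PowerSeries ℚ) * PowerSeries.X * (1 + PowerSeries.X) ^ (a k - 1))) ∧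
    ∀ w ∈ W, (Pi.single (Sum.inl w) 1 : (V ⊕ (Σ i : Fin n, Fin (a i))) → ℝ) ∈
      Submodule.span NNReal ({(Pi.single (Sum.inl r) 1)} ∪ partVerts (a := a) φ S) := by
  induction h with
  | base =>
    have h1 : partVerts (a := a) φ ∅ = ∅ := by
      ext x; simp [partVerts]
    rw [h1, Set.union_empty]
    have := goodCone_base (Sum.inl r : V ⊕ (Σ i : Fin n, Fin (a i)))
    refine ⟨?_, ?_⟩
    · convert this using 1
      · ext i
        rcases i with w | f <;> simp
      · simp
      · simp
    · intro w hw
      rw [Finset.mem_singleton] at hw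
      subst hw
      exact Submodule.mem_span_singleton_self _
  | step W S v c k hb hv hc hk ih =>
    obtain ⟨g, hW⟩ := ih
    obtain ⟨h0, h1, h2⟩ := hb.inv
    have hkS : k ∉ S := fun h => hc (h1 k h c (by simp [hk]))
    have := g.step (ha k) (v := Sum.inl v) (c := Sum.inl c) (F := blockEmb k) hv hc
      (fun j j' e => by simpa [blockEmb] using e) (fun j => hkS) (fun j => by simp [blockEmb]) (hW v hv)
    rw [partVerts_insert φ S k v c hk, ← Set.union_assoc, Submodule.span_union]
    refine ⟨?_, ?_⟩
    · convert this using 1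
      · ext i
        rcases i with w | ⟨k', j⟩
        · simp [blockEmb]
        · simp [blockEmb]
          constructor
          · rintro (rfl | h)
            · exact Or.inr ⟨rfl, j, HEq.rfl⟩
            · exact Or.inl h
          · rintro (h | ⟨rfl, _⟩)
            · exact Or.inr h
            · exact Or.inl rfl
      · rw [Finset.card_insert_of_notMem hc, Finset.sum_insert hkS]
        ring
      · rw [Finset.prod_insert hkS, mul_comm]
    · intro w hw
      rcases Finset.mem_insert.1 hw with rfl | hw
      · exact Submodule.mem_sup_right (single_c_mem ⟨0, ha k⟩)
      · exact Submodule.mem_sup_left (hW w hw)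

end Tree

theorem ehrhart_eq {ι : Type*} [Fintype ι] [DecidableEq ι] {s : Set (ι → ℝ)} (hne : s.Nonempty)
    (h1 : ∀ x ∈ s, ∑ i, x i = 1) (hfin : FinFib (degZ (Submodule.span NNReal s)))
    (hnn : ∀ x ∈ Submodule.span NNReal s, 0 ≤ ∑ i, x i) :
    ehrhartSeries (convexHull ℝ s) = wgf (degZ (Submodule.span NNReal s)) (fun _ => 1) := by
  have hset : ∀ t : ℕ, {x : ι → ℤ | (fun k => (x k : ℝ)) ∈ (t : ℝ) • convexHull ℝ s} =
      Subtype.val '' (degZ (Submodule.span NNReal s) ⁻¹' {t}) := by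
    intro t
    ext x
    rw [Set.mem_ofPred_eq, mem_cone_iff hne h1 t (Nat.cast_nonneg t)]
    constructor
    · rintro ⟨hx, hs⟩
      refine ⟨⟨x, hx⟩, ?_, rfl⟩
      have : ∑ i, x i = (t : ℤ) := by exact_mod_cast hs
      simp [degZ, this]
    · rintro ⟨⟨x, hx⟩, hd, rfl⟩
      refine ⟨hx, ?_⟩
      have h0 : (0:ℤ) ≤ ∑ i, x i := by
        have := hnn _ hx
        exact_mod_cast this
      simp [degZ] at hd
      have : ∑ i, x i = (t : ℤ) := by omega
      exact_mod_cast this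
  have hcount : ∀ t, PowerSeries.coeff t (wgf (degZ (Submodule.span NNReal s)) (fun _ => 1)) =
      (latticePointCount (convexHull ℝ s) t : ℚ) := by
    intro t
    rw [coeff_wgf hfin, latticePointCount, hset, Set.ncard_image_of_injective _ Subtype.val_injective,
      Set.ncard_eq_toFinset_card _ (hfin t)]
    simp
  ext t
  rw [hcount, ehrhartSeries, PowerSeries.coeff_mk]
  split_ifs with h
  · subst h
    have : {x : ι → ℤ | (fun k => (x k : ℝ)) ∈ ((0:ℕ) : ℝ) • convexHull ℝ s} = {0} := by
      ext x
      have hz : ((0:ℕ):ℝ) • convexHull ℝ s = {0} := by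
        rw [Nat.cast_zero, Set.zero_smul_set hne.convexHull]
        rfl
      rw [Set.mem_ofPred_eq, hz]
      simp [funext_iff]
    rw [latticePointCount, this]
    simp
  · rfl

/-- Let `n ≥ 1`, `a = (a_1, …, a_n)` with all `a_i ≥ 1`, and let `T` be a
multitree of type `a`: the graph obtained from a tree with `n` edges (enumerated by
`φ : Fin n → Sym2 V`) by replacing its `i`-th edge by `a_i` parallel copies.  Then
`h*(C_T; z) = ∏_i ((1+z)^{a_i} + 2 a_i z (1+z)^{a_i−1})`. -/
theorem hstar_multitree {V : Type*} [Fintype V] [DecidableEq V]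
    (n : ℕ) (hn : 0 < n) (a : Fin n → ℕ) (ha : ∀ i, 1 ≤ a i)
    (T : SimpleGraph V) (htree : T.IsTree)
    (φ : Fin n → Sym2 V) (hφinj : Function.Injective φ)
    (hφmem : ∀ i, φ i ∈ T.edgeSet) (hφsurj : ∀ s ∈ T.edgeSet, ∃ i, φ i = s) :
    IsHStarPoly (cosmoPolytope (fun p : Σ i : Fin n, Fin (a i) => φ p.1))
      (Fintype.card V + Fintype.card (Σ i : Fin n, Fin (a i)) - 1)
      (∏ i : Fin n, ((1 + Polynomial.X) ^ (a i) +
        2 * (a i : Polynomial ℚ) * Polynomial.X * (1 + Polynomial.X) ^ (a i - 1))) := by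
  
  obtain ⟨r, hr⟩ : ∃ r, r ∈ φ ⟨0, hn⟩ := ⟨_, Sym2.out_fst_mem _⟩
  obtain ⟨hb, hcard⟩ := exists_treeBuild T htree φ hφinj hφmem hφsurj r
  obtain ⟨g, -⟩ := hb.good ha
  have hv : partVerts (a := a) φ Finset.univ =
      cosmoVertices (fun p : Σ i : Fin n, Fin (a i) => φ p.1) := by
    ext x
    simp [partVerts, cosmoVertices]
  rw [hv] at g
  set s := cosmoVertices (fun p : Σ i : Fin n, Fin (a i) => φ p.1) with hs
  obtain ⟨q, hq⟩ : ∃ q, φ ⟨0, hn⟩ = s(q, r) := by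
    obtain ⟨q, hq⟩ := Sym2.mem_iff_exists.1 hr
    exact ⟨q, by rw [hq, Sym2.eq_swap]⟩
  have hrs : (Pi.single (Sum.inl r) 1 : (V ⊕ (Σ i : Fin n, Fin (a i))) → ℝ) ∈ Submodule.span NNReal s := by
    have := single_c_mem (v := (Sum.inl q : V ⊕ (Σ i : Fin n, Fin (a i)))) (c := Sum.inl r)
      (F := blockEmb (a := a) ⟨0, hn⟩) ⟨0, ha _⟩
    refine Submodule.span_mono ?_ this
    rintro x ⟨j, hx⟩
    exact ⟨⟨⟨0, hn⟩, j⟩, q, r, hq, hx⟩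
  have hspan : Submodule.span NNReal ({(Pi.single (Sum.inl r) 1)} ∪ s) = Submodule.span NNReal s := by
    rw [Submodule.span_union]
    exact sup_eq_right.2 (Submodule.span_le.2 (by simpa using hrs))
  rw [hspan] at g
  have hne : s.Nonempty := ⟨_, ⟨⟨⟨0, hn⟩, ⟨0, ha _⟩⟩, q, r, hq, Or.inl rfl⟩⟩
  have h1 : ∀ x ∈ s, ∑ i, x i = 1 := by
    rintro x ⟨f, i, j, -, rfl | rfl | rfl⟩ <;>
      simp only [Pi.add_apply, Pi.sub_apply, Pi.neg_apply, Finset.sum_add_distrib, Finset.sum_sub_distrib,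
        Finset.sum_neg_distrib, Fintype.sum_pi_single, Finset.sum_pi_single', Finset.mem_univ, if_true] <;>
      norm_num
  unfold IsHStarPoly cosmoPolytope
  rw [← hs, ehrhart_eq hne h1 g.fin g.nonneg]
  have hN : Fintype.card V + Fintype.card (Σ i : Fin n, Fin (a i)) - 1 + 1 =
      (Finset.univ : Finset V).card + ∑ k, a k := by
    rw [Fintype.card_sigma, Finset.card_univ]
    simp
    omega
  rw [hN, g.gf]
  have := map_prod (Polynomial.coeToPowerSeries.ringHom (R := ℚ)) (fun i : Fin n => ((1 + Polynomial.X) ^ (a i) +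
        2 * (a i : Polynomial ℚ) * Polynomial.X * (1 + Polynomial.X) ^ (a i - 1))) Finset.univ
  simp only [Polynomial.coeToPowerSeries.ringHom_apply] at this
  rw [this]
  refine Finset.prod_congr rfl fun i _ => ?_
  simp only [← Polynomial.coeToPowerSeries.ringHom_apply, map_add, map_mul, map_pow, map_one, map_natCast, map_ofNat]
  simp
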